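/- Let X be a topological space and G a family of open subsets of X that is a subbasis for its topology, let i : X → (G → Prop) be the map i x g = (x ∈ g), and let q̄ : Opens (G → Prop) → Opens X be the map U ↦ i⁻¹(U). Suppose the map q̄ × id : Opens (G → Prop) × X → Opens X × X is a quotient map (with Scott topologies on both lattices of opens). Then the evaluation map ev : Opens X × X → Prop, (U, x) ↦ (x ∈ U), is continuous; moreover, for every topological space A and every continuous h : A × X → Prop there is a unique continuous map v : A → Opens X (Scott topology) with h (a, x) ↔ x ∈ v a for all a, x, so that Opens X with the Scott topology is the exponential Σ^X. -/

import Mathlib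

open TopologicalSpace

/-- A subset of a complete lattice is Scott-open if it is an upper set and every nonempty
directed set whose supremum lies in it meets it. -/
def ScottOpen {α : Type*} [CompleteLattice α] (U : Set α) : Prop :=
  IsUpperSet U ∧
    ∀ d : Set α, d.Nonempty → DirectedOn (· ≤ ·) d → sSup d ∈ U → (d ∩ U).Nonempty

/-- The Scott topology on a complete lattice. -/
def scottTopology (α : Type*) [CompleteLattice α] : TopologicalSpace α where
  IsOpen := ScottOpen
  isOpen_univ := ⟨isUpperSet_univ, fun d hd _ _ => by simpa using hd⟩
  isOpen_inter := by
    rintro U V ⟨hU, hU'⟩ ⟨hV, hV'⟩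
    refine ⟨hU.inter hV, fun d hd hdir hsup => ?_⟩
    obtain ⟨a, ha, haU⟩ := hU' d hd hdir hsup.1
    obtain ⟨b, hb, hbV⟩ := hV' d hd hdir hsup.2
    obtain ⟨c, hc, hac, hbc⟩ := hdir a ha b hb
    exact ⟨c, hc, hU hac haU, hV hbc hbV⟩
  isOpen_sUnion := by
    intro S hS
    refine ⟨isUpperSet_sUnion fun s hs => (hS s hs).1, fun d hd hdir hsup => ?_⟩
    obtain ⟨U, hU, hmem⟩ := hsup
    obtain ⟨a, ha, haU⟩ := (hS U hU).2 d hd hdir hmem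
    exact ⟨a, ha, U, hU, haU⟩

/-- The canonical map from a space into `Σ^G` for a family `G` of subsets. -/
def iMap {X : Type*} (G : Set (Set X)) : X → (↥G → Prop) := fun x g => x ∈ (g : Set X)

/-!
Evaluation at a locally compact space `Y` is continuous: if `K` is a compact neighbourhood of `y`
contained in `U`, then `{V | K ⊆ V} ×ˢ interior K` is a neighbourhood of `(U, y)` on which
evaluation is true. The powers of `Prop` are locally compact, and a quotient map
`Opens Y × X → Opens X × X` carries the continuity over to `Opens X`, since evaluation at `X`
composed with it is evaluation at `Y` composed with `id × f`.

The transpose of an open subset of `A × X` is always Scott continuous: by the definition of the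
product topology each slice is the union of the directed family of those open sets that are
contained in all nearby slices.
-/

section ScottOpens

open Filter Set Topology

/-- The Scott topology as the topology of a lattice of open sets. It is installed only on `Opens X`,
because on all complete lattices it would compete with the product topology of `ι → Prop`. -/
local instance opensScottTopology {X : Type*} [TopologicalSpace X] : TopologicalSpace (Opens X) :=
  scottTopology (Opens X)

theorem directedOn_setOf_eventually_le {A L : Type*} [SemilatticeSup L] (l : Filter A)
    (f : A → L) : DirectedOn (· ≤ ·) {c | ∀ᶠ b in l, c ≤ f b} := fun c hc d hd =>
  ⟨c ⊔ d, (hc.and hd).mono fun _ hb => sup_le hb.1 hb.2, le_sup_left, le_sup_right⟩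

theorem continuous_scottTopology_of_le_sSup {A L : Type*} [TopologicalSpace A] [CompleteLattice L]
    {f : A → L} (hf : ∀ a, f a ≤ sSup {c | ∀ᶠ b in 𝓝 a, c ≤ f b}) :
    Continuous[_, scottTopology L] f := by
  let _ : TopologicalSpace L := scottTopology L
  refine continuous_def.2 fun W hW => isOpen_iff_mem_nhds.2 fun a ha => ?_
  obtain ⟨hWup, hWsSup⟩ : ScottOpen W := hW
  obtain ⟨c, hc, hcW⟩ := hWsSup {c | ∀ᶠ b in 𝓝 a, c ≤ f b} ⟨⊥, .of_forall fun _ => bot_le⟩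
    (directedOn_setOf_eventually_le _ f) (hWup (hf a) ha)
  exact hc.mono fun b hb => hWup hb hcW

variable {A X Y : Type*} [TopologicalSpace A] [TopologicalSpace X] [TopologicalSpace Y]

theorem le_sSup_eventually_le_of_isOpen {v : A → Opens X}
    (hv : IsOpen {p : A × X | p.2 ∈ v p.1}) (a : A) :
    v a ≤ sSup {O | ∀ᶠ b in 𝓝 a, O ≤ v b} := by
  intro x hx
  obtain ⟨N, O, hN, hO, haN, hxO, hNO⟩ := isOpen_prod_iff.1 hv a x hx
  have hOv : ∀ᶠ b in 𝓝 a, (⟨O, hO⟩ : Opens X) ≤ v b :=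
    (hN.eventually_mem haN).mono fun b hb y hy => hNO (mk_mem_prod hb hy)
  exact Opens.mem_sSup.2 ⟨⟨O, hO⟩, hOv, hxO⟩

theorem existsUnique_continuous_opens_transpose {h : A × X → Prop} (hh : Continuous h) :
    ∃! v : A → Opens X, Continuous v ∧ ∀ a x, h (a, x) ↔ x ∈ v a := by
  have hopen : IsOpen {p | h p} := continuous_Prop.1 hh
  let v (a : A) : Opens X := ⟨{x | h (a, x)}, hopen.preimage (Continuous.prodMk_right a)⟩
  have hv : Continuous v :=
    continuous_scottTopology_of_le_sSup (le_sSup_eventually_le_of_isOpen hopen)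
  refine ⟨v, ⟨hv, fun _ _ => Iff.rfl⟩, fun w hw => ?_⟩
  ext a x
  exact (hw.2 a x).symm

theorem scottOpen_setOf_subset_of_isCompact {K : Set Y} (hK : IsCompact K) :
    ScottOpen {U : Opens Y | K ⊆ U} := by
  refine ⟨fun _ _ hUV hKU _ hx => hUV (hKU hx), fun d hne hd hKd => ?_⟩
  have : Nonempty d := hne.to_subtype
  have hcover : K ⊆ ⋃ U : d, (U : Opens Y) := by
    simpa [Opens.coe_sSup, iUnion_subtype] using hKd
  obtain ⟨U, hKU⟩ := hK.elim_directed_cover (fun U : d => ((U : Opens Y) : Set Y))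
    (fun U => U.1.isOpen) hcover hd.directed_val
  exact ⟨U, U.2, hKU⟩

theorem continuous_mem_opens [LocallyCompactSpace Y] :
    Continuous (fun p : Opens Y × Y => p.2 ∈ p.1) := by
  rw [continuous_Prop, isOpen_prod_iff]
  intro U y hy
  obtain ⟨K, hK, hyK, hKU⟩ := exists_compact_subset U.isOpen hy
  exact ⟨{V | K ⊆ V}, interior K, scottOpen_setOf_subset_of_isCompact hK, isOpen_interior, hKU, hyK,
    fun p hp => hp.1 (interior_subset hp.2)⟩

theorem continuous_mem_opens_of_isQuotientMap (f : C(X, Y))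
    (hf : IsQuotientMap (Prod.map (Opens.comap f) (id : X → X)))
    (hY : Continuous (fun p : Opens Y × Y => p.2 ∈ p.1)) :
    Continuous (fun p : Opens X × X => p.2 ∈ p.1) :=
  hf.continuous_iff.2 (hY.comp (continuous_id.prodMap f.continuous))

theorem opens_scott_exponential_of_quotient_general [LocallyCompactSpace Y] (f : C(X, Y))
    (hf : IsQuotientMap (Prod.map (Opens.comap f) (id : X → X))) :
    Continuous (fun p : Opens X × X => p.2 ∈ p.1) ∧
      ∀ (A : Type*) [TopologicalSpace A] (h : A × X → Prop), Continuous h →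
        ∃! v : A → Opens X, Continuous v ∧ ∀ (a : A) (x : X), h (a, x) ↔ x ∈ v a :=
  ⟨continuous_mem_opens_of_isQuotientMap f hf continuous_mem_opens,
    fun _ _ _ hh => existsUnique_continuous_opens_transpose hh⟩

end ScottOpens

/-- If `q̄ × id : Opens (Σ^G) × X → Opens X × X` is a quotient map (Scott
topologies on the lattices of opens), then the evaluation map of `Opens X` is continuous and
`Opens X` with the Scott topology is the exponential `Σ^X`. -/
theorem opens_scott_exponential_of_quotient {X : Type v} [tX : TopologicalSpace X]
    (G : Set (Set X)) (hG : tX = TopologicalSpace.generateFrom G)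
    (hi : Continuous (iMap G))
    (hq : letI : TopologicalSpace (Opens X) := scottTopology (Opens X)
      letI : TopologicalSpace (Opens (↥G → Prop)) := scottTopology (Opens (↥G → Prop))
      Topology.IsQuotientMap (fun p : Opens (↥G → Prop) × X =>
        ((Opens.comap ⟨iMap G, hi⟩ p.1, p.2) : Opens X × X))) :
    letI : TopologicalSpace (Opens X) := scottTopology (Opens X)
    Continuous (fun p : Opens X × X => p.2 ∈ p.1) ∧
      ∀ (A : Type u) [TopologicalSpace A] (h : A × X → Prop), Continuous h →
        ∃! v : A → Opens X, Continuous v ∧ ∀ (a : A) (x : X), h (a, x) ↔ x ∈ v a :=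
  opens_scott_exponential_of_quotient_general ⟨iMap G, hi⟩ hq
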